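/- For λ∈ba(𝒜), the set ba₀(λ) contains a nonzero element if and only if λ is not strongly continuous. -/

import Mathlib

open Set Filter Topology

namespace FA

/-- An algebra of subsets of `Ω`. -/
structure SetAlg (Ω : Type*) where
  sets : Set (Set Ω)
  empty_mem : ∅ ∈ sets
  compl_mem : ∀ ⦃A⦄, A ∈ sets → Aᶜ ∈ sets
  union_mem : ∀ ⦃A B⦄, A ∈ sets → B ∈ sets → A ∪ B ∈ sets

/-- A bounded, finitely additive real-valued set function on the algebra `𝒜`,
i.e. an element of `ba(𝒜)`. -/
structure BAMeasure {Ω : Type*} (𝒜 : SetAlg Ω) where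
  toFun : Set Ω → ℝ
  map_empty : toFun ∅ = 0
  additive : ∀ ⦃A B : Set Ω⦄, A ∈ 𝒜.sets → B ∈ 𝒜.sets → Disjoint A B →
      toFun (A ∪ B) = toFun A + toFun B
  bounded : ∃ M : ℝ, ∀ A ∈ 𝒜.sets, |toFun A| ≤ M

variable {Ω : Type*} {𝒜 : SetAlg Ω}

/-- Total variation `|λ|(A) = λ⁺(A) + λ⁻(A)`. -/
noncomputable def var (lam : BAMeasure 𝒜) (A : Set Ω) : ℝ :=
  sSup {x | ∃ B ∈ 𝒜.sets, B ⊆ A ∧ x = lam.toFun B} +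
  sSup {x | ∃ B ∈ 𝒜.sets, B ⊆ A ∧ x = -lam.toFun B}

/-- The outer measure `|λ|*(B) = inf {|λ|(A) : A ∈ 𝒜, B ⊆ A}`. -/
noncomputable def outer (lam : BAMeasure 𝒜) (B : Set Ω) : ℝ :=
  sInf {x | ∃ A ∈ 𝒜.sets, B ⊆ A ∧ x = var lam A}

/-- `𝒜`-simple functions. -/
def IsSimple (𝒜 : SetAlg Ω) (f : Ω → ℝ) : Prop :=
  (Set.range f).Finite ∧ ∀ r : ℝ, f ⁻¹' {r} ∈ 𝒜.sets

/-- `λ`-convergence: `(f n)` converges to `g` in `λ`-measure. -/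
def LConv (lam : BAMeasure 𝒜) (f : ℕ → Ω → ℝ) (g : Ω → ℝ) : Prop :=
  ∀ c > (0:ℝ), Tendsto (fun n => outer lam {ω | c < |f n ω - g ω|}) atTop (𝓝 0)

/-- `λ`-Cauchy sequences. -/
def LCauchy (lam : BAMeasure 𝒜) (f : ℕ → Ω → ℝ) : Prop :=
  ∀ c > (0:ℝ), ∀ ε > (0:ℝ), ∃ N : ℕ, ∀ p q : ℕ,
    outer lam {ω | c < |f (N + p) ω - f (N + q) ω|} < ε

/-- `L⁰(λ)`: `λ`-limits of sequences of `𝒜`-simple functions. -/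
def L0 (lam : BAMeasure 𝒜) : Set (Ω → ℝ) :=
  {f | ∃ s : ℕ → Ω → ℝ, (∀ n, IsSimple 𝒜 (s n)) ∧ LConv lam s f}

/-- The metric of `L⁰(λ)`: `d(f,g) = inf {c + |λ|*(|f-g| ≥ c) : c > 0}`. -/
noncomputable def dL0 (lam : BAMeasure 𝒜) (f g : Ω → ℝ) : ℝ :=
  sInf {x | ∃ c > (0:ℝ), x = c + outer lam {ω | c ≤ |f ω - g ω|}}

/-- A set `K` is bounded in `L⁰(λ)` if `lim_{c→∞} sup_{f∈K} |λ|*(|f|>c) = 0`. -/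
def BddL0 (lam : BAMeasure 𝒜) (K : Set (Ω → ℝ)) : Prop :=
  ∀ ε > (0:ℝ), ∃ c₀ : ℝ, ∀ c ≥ c₀, ∀ f ∈ K, outer lam {ω | c < |f ω|} < ε

/-- The nonnegative elements of `L⁰(λ)`. -/
def L0pos (lam : BAMeasure 𝒜) : Set (Ω → ℝ) := {f ∈ L0 lam | ∀ ω, 0 ≤ f ω}

/-- The elementary integral of a simple function with respect to a set function. -/
noncomputable def simpleIntegral (m : Set Ω → ℝ) (f : Ω → ℝ) : ℝ :=
  ∑ᶠ r : ℝ, r * m (f ⁻¹' {r})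

/-- Dunford–Schwartz integrability: there is a sequence of simple functions converging to `f`
in `λ`-measure which is Cauchy in mean. -/
def MemL1 (lam : BAMeasure 𝒜) (f : Ω → ℝ) : Prop :=
  ∃ s : ℕ → Ω → ℝ, (∀ n, IsSimple 𝒜 (s n)) ∧ LConv lam s f ∧
    ∀ ε > (0:ℝ), ∃ N : ℕ, ∀ m ≥ N, ∀ n ≥ N,
      simpleIntegral (var lam) (fun ω => |s m ω - s n ω|) < ε

/-- `L¹(λ)`. -/
def L1 (lam : BAMeasure 𝒜) : Set (Ω → ℝ) := {f | MemL1 lam f}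

open scoped Classical in
/-- The Dunford–Schwartz integral `∫ f dλ`. -/
noncomputable def integral (lam : BAMeasure 𝒜) (f : Ω → ℝ) : ℝ :=
  if h : MemL1 lam f then
    limUnder atTop (fun n => simpleIntegral lam.toFun (h.choose n))
  else 0

open scoped Classical in
/-- The `L¹(λ)` seminorm `∫ |f| d|λ|`. -/
noncomputable def l1Norm (lam : BAMeasure 𝒜) (f : Ω → ℝ) : ℝ :=
  if h : MemL1 lam f then
    limUnder atTop (fun n => simpleIntegral (var lam) (fun ω => |h.choose n ω|))
  else 0

/-- A set is bounded in `L¹(μ)` if the integrals `∫|f| d|μ|` are uniformly bounded. -/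
def BddL1 (mu : BAMeasure 𝒜) (K : Set (Ω → ℝ)) : Prop :=
  ∃ M : ℝ, ∀ f ∈ K, l1Norm mu f ≤ M

/-- Finitely additive probability measures. -/
def IsFAProb (mu : BAMeasure 𝒜) : Prop :=
  mu.toFun Set.univ = 1 ∧ ∀ A ∈ 𝒜.sets, 0 ≤ mu.toFun A

/-- `μ ∈ 𝔓_*(λ)`: a finitely additive probability with `|μ| ≤ c |λ|` and the same null
sets as `λ`. -/
def PStar (lam mu : BAMeasure 𝒜) : Prop :=
  IsFAProb mu ∧ (∃ c : ℝ, 0 ≤ c ∧ ∀ A ∈ 𝒜.sets, var mu A ≤ c * var lam A) ∧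
  ∀ A ∈ 𝒜.sets, (mu.toFun A = 0 ↔ var lam A = 0)

/-- `μ ∈ 𝔓_*(λ; K)`. -/
def PStarWith (lam : BAMeasure 𝒜) (K : Set (Ω → ℝ)) (mu : BAMeasure 𝒜) : Prop :=
  PStar lam mu ∧ K ⊆ L1 mu ∧ BddL1 mu K

/-- `f` is a `λ`-a.s. lower bound of `K`. -/
def ASLowerBound (lam : BAMeasure 𝒜) (f : Ω → ℝ) (K : Set (Ω → ℝ)) : Prop :=
  ∀ c > (0:ℝ), ∀ k ∈ K, outer lam {ω | k ω < f ω - c} = 0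

/-- Absolute continuity `μ ≪ λ` for bounded finitely additive set functions. -/
def AbsCont (mu lam : BAMeasure 𝒜) : Prop :=
  ∀ ε > (0:ℝ), ∃ δ > (0:ℝ), ∀ A ∈ 𝒜.sets, var lam A < δ → var mu A < ε

/-- `λ ∈ ba₀(𝒜)`: the range of `λ` is finite. -/
def FiniteRange (lam : BAMeasure 𝒜) : Prop := (lam.toFun '' 𝒜.sets).Finite

/-- `μ ∈ ba₀(λ)`. -/
def BA0rel (lam mu : BAMeasure 𝒜) : Prop := FiniteRange mu ∧ AbsCont mu lam

/-- Strong continuity: arbitrarily fine finite partitions. -/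
def StronglyContinuous (lam : BAMeasure 𝒜) : Prop :=
  ∀ ε > (0:ℝ), ∃ (N : ℕ) (A : Fin N → Set Ω), (∀ n, A n ∈ 𝒜.sets) ∧
    Pairwise (Function.onFun Disjoint A) ∧ (⋃ n, A n) = Set.univ ∧
    ∀ n, var lam (A n) < ε

/-- Orthogonality of bounded finitely additive set functions. -/
def Orthogonal (mu nu : BAMeasure 𝒜) : Prop :=
  ∀ ε > (0:ℝ), ∃ A ∈ 𝒜.sets, var mu A < ε ∧ var nu Aᶜ < ε

/-- Strong discontinuity: orthogonal to every strongly continuous element of `ba(𝒜)`. -/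
def StronglyDiscontinuous (mu : BAMeasure 𝒜) : Prop :=
  ∀ nu : BAMeasure 𝒜, StronglyContinuous nu → Orthogonal mu nu

/-- Countable additivity of `λ` on the algebra `𝒜`. -/
def CountablyAdditive (lam : BAMeasure 𝒜) : Prop :=
  ∀ A : ℕ → Set Ω, (∀ n, A n ∈ 𝒜.sets) → Pairwise (Function.onFun Disjoint A) →
    (⋃ n, A n) ∈ 𝒜.sets → HasSum (fun n => lam.toFun (A n)) (lam.toFun (⋃ n, A n))

/-- `𝒜` is a σ-algebra. -/
def IsSigmaAlg (𝒜 : SetAlg Ω) : Prop :=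
  ∀ A : ℕ → Set Ω, (∀ n, A n ∈ 𝒜.sets) → (⋃ n, A n) ∈ 𝒜.sets

/-- Linearity of a functional on `L⁰(λ)`. -/
def LinearOnL0 (lam : BAMeasure 𝒜) (φ : (Ω → ℝ) → ℝ) : Prop :=
  (∀ f ∈ L0 lam, ∀ g ∈ L0 lam, φ (f + g) = φ f + φ g) ∧
  (∀ a : ℝ, ∀ f ∈ L0 lam, φ (a • f) = a * φ f)

/-- Continuity of a functional on `L⁰(λ)` with respect to the metric `d`. -/
def ContinuousOnL0 (lam : BAMeasure 𝒜) (φ : (Ω → ℝ) → ℝ) : Prop :=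
  ∀ f ∈ L0 lam, ∀ ε > (0:ℝ), ∃ δ > (0:ℝ), ∀ g ∈ L0 lam, dL0 lam g f < δ → |φ g - φ f| < ε

/-!
If `μ ≪ λ` and `λ` is strongly continuous, so is `μ`; if moreover the range of `μ` is finite, its
nonzero values are bounded away from `0`, so every set splits into finitely many pieces on which
`μ` vanishes, and `μ = 0`. Conversely, if `λ` is not strongly continuous, then for some `ε > 0` no
finitely many sets of variation less than `ε` cover `Ω`, since a finite cover can be made disjoint.
By compactness some ultrafilter contains none of these sets, and its `{0, 1}`-valued measure
vanishes on all of them, hence is absolutely continuous with respect to `λ`.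
-/

theorem exists_ultrafilter_forall_notMem {α : Type*} {S : Set (Set α)}
    (hS : ∀ T : Finset (Set α), ↑T ⊆ S → ⋃₀ (T : Set (Set α)) ≠ univ) :
    ∃ U : Ultrafilter α, ∀ s ∈ S, s ∉ U := by
  classical
  obtain ⟨U, hU⟩ := Ultrafilter.exists_ultrafilter_of_finite_inter_nonempty (compl '' S) <| by
    intro T hT
    have hsub : ↑(T.image compl) ⊆ S := by
      rw [Finset.coe_image, image_subset_iff]
      intro t ht
      obtain ⟨s, hs, rfl⟩ := hT ht
      simpa only [mem_preimage, compl_compl] using hs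
    have hcover := hS _ hsub
    rwa [Finset.coe_image, ← compl_sInter, ne_eq, compl_univ_iff, ← ne_eq,
      ← nonempty_iff_ne_empty] at hcover
  exact ⟨U, fun s hs ↦ Ultrafilter.compl_mem_iff_notMem.1 (hU (mem_image_of_mem compl hs))⟩

theorem SetAlg.isSetAlgebra (𝒜 : SetAlg Ω) : MeasureTheory.IsSetAlgebra 𝒜.sets :=
  ⟨𝒜.empty_mem, 𝒜.compl_mem, 𝒜.union_mem⟩

namespace BAMeasure

/-- The pointwise negative `-λ`, whose positive variation is the negative variation of `λ`. -/
instance : Neg (BAMeasure 𝒜) where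
  neg lam :=
    { toFun A := -lam.toFun A
      map_empty := by rw [lam.map_empty, neg_zero]
      additive A B hA hB hAB := by rw [lam.additive hA hB hAB, neg_add]
      bounded := by simpa only [abs_neg] using lam.bounded }

theorem neg_toFun (lam : BAMeasure 𝒜) (A : Set Ω) : (-lam).toFun A = -lam.toFun A := rfl

end BAMeasure

/-- The positive variation `λ⁺(A)`; the negative variation `λ⁻(A)` is `posVar (-lam) A`. -/
noncomputable def posVar (lam : BAMeasure 𝒜) (A : Set Ω) : ℝ :=
  sSup {x | ∃ B ∈ 𝒜.sets, B ⊆ A ∧ x = lam.toFun B}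

theorem var_eq_posVar_add_posVar_neg (lam : BAMeasure 𝒜) (A : Set Ω) :
    var lam A = posVar lam A + posVar (-lam) A := rfl

theorem le_posVar (lam : BAMeasure 𝒜) {A B : Set Ω} (hB : B ∈ 𝒜.sets) (hBA : B ⊆ A) :
    lam.toFun B ≤ posVar lam A := by
  obtain ⟨M, hM⟩ := lam.bounded
  refine le_csSup ⟨M, ?_⟩ ⟨B, hB, hBA, rfl⟩
  rintro _ ⟨C, hC, -, rfl⟩
  exact (le_abs_self _).trans (hM C hC)

theorem posVar_le (lam : BAMeasure 𝒜) {A : Set Ω} {c : ℝ}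
    (h : ∀ B ∈ 𝒜.sets, B ⊆ A → lam.toFun B ≤ c) : posVar lam A ≤ c := by
  refine csSup_le ⟨_, ∅, 𝒜.empty_mem, empty_subset A, rfl⟩ ?_
  rintro _ ⟨B, hB, hBA, rfl⟩
  exact h B hB hBA

theorem posVar_nonneg (lam : BAMeasure 𝒜) (A : Set Ω) : 0 ≤ posVar lam A :=
  lam.map_empty.ge.trans (le_posVar lam 𝒜.empty_mem (empty_subset A))

theorem posVar_mono (lam : BAMeasure 𝒜) : Monotone (posVar lam) := fun _ _ hAA' ↦
  posVar_le lam fun _ hB hBA ↦ le_posVar lam hB (hBA.trans hAA')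

theorem var_mono (lam : BAMeasure 𝒜) : Monotone (var lam) :=
  (posVar_mono lam).add (posVar_mono (-lam))

theorem abs_le_var (lam : BAMeasure 𝒜) {A : Set Ω} (hA : A ∈ 𝒜.sets) :
    |lam.toFun A| ≤ var lam A := by
  rw [var_eq_posVar_add_posVar_neg]
  refine abs_le'.2 ⟨?_, ?_⟩
  · exact le_add_of_le_of_nonneg (le_posVar lam hA subset_rfl) (posVar_nonneg _ A)
  · exact le_add_of_nonneg_of_le (posVar_nonneg _ A) (le_posVar (-lam) hA subset_rfl)

theorem var_nonpos (lam : BAMeasure 𝒜) {A : Set Ω}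
    (h : ∀ B ∈ 𝒜.sets, B ⊆ A → lam.toFun B = 0) : var lam A ≤ 0 :=
  add_nonpos (posVar_le lam fun B hB hBA ↦ (h B hB hBA).le)
    (posVar_le (-lam) fun B hB hBA ↦ by rw [BAMeasure.neg_toFun, h B hB hBA, neg_zero])

/-- An element of `ba(𝒜)` as a real-valued additive content, which makes finite additivity over
families available. -/
noncomputable def BAMeasure.toAddContent (lam : BAMeasure 𝒜) :
    MeasureTheory.AddContent ℝ 𝒜.sets :=
  𝒜.isSetAlgebra.isSetRing.addContent_of_union lam.toFun lam.map_empty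
    fun hA hB hAB ↦ lam.additive hA hB hAB

theorem BAMeasure.toFun_eq_sum_inter (lam : BAMeasure 𝒜) {ι : Type*} [Fintype ι] {P : ι → Set Ω}
    (hP : ∀ i, P i ∈ 𝒜.sets) (hdisj : Pairwise (Function.onFun Disjoint P))
    (hcover : ⋃ i, P i = univ) {A : Set Ω} (hA : A ∈ 𝒜.sets) :
    lam.toFun A = ∑ i, lam.toFun (A ∩ P i) := by
  have hunion : ⋃ i, A ∩ P i = A := by rw [← inter_iUnion, hcover, inter_univ]
  have hsum := MeasureTheory.addContent_iUnion (m := lam.toAddContent)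
    (fun i ↦ 𝒜.isSetAlgebra.inter_mem hA (hP i))
    (fun i j hij ↦ (hdisj hij).mono inter_subset_right inter_subset_right)
    (hunion.symm ▸ hA)
  rwa [hunion] at hsum

theorem AbsCont.stronglyContinuous {mu lam : BAMeasure 𝒜} (hac : AbsCont mu lam)
    (hlam : StronglyContinuous lam) : StronglyContinuous mu := by
  intro ε hε
  obtain ⟨δ, hδ, hmu⟩ := hac ε hε
  obtain ⟨N, P, hP, hdisj, hcover, hsmall⟩ := hlam δ hδ
  exact ⟨N, P, hP, hdisj, hcover, fun n ↦ hmu (P n) (hP n) (hsmall n)⟩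

theorem FiniteRange.exists_pos_forall_eq_zero_of_abs_lt {mu : BAMeasure 𝒜} (hmu : FiniteRange mu) :
    ∃ ε > 0, ∀ A ∈ 𝒜.sets, |mu.toFun A| < ε → mu.toFun A = 0 := by
  have hopen : IsOpen (mu.toFun '' 𝒜.sets \ {0})ᶜ :=
    (hmu.subset sdiff_subset).isClosed.isOpen_compl
  obtain ⟨ε, hε, hball⟩ := Metric.isOpen_iff.1 hopen 0 fun h ↦ h.2 rfl
  refine ⟨ε, hε, fun A hA hlt ↦ by_contra fun hne ↦ ?_⟩
  exact hball (mem_ball_zero_iff.2 hlt) ⟨mem_image_of_mem _ hA, hne⟩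

theorem FiniteRange.eq_zero_of_stronglyContinuous {mu : BAMeasure 𝒜} (hfin : FiniteRange mu)
    (hmu : StronglyContinuous mu) {A : Set Ω} (hA : A ∈ 𝒜.sets) : mu.toFun A = 0 := by
  obtain ⟨ε, hε, hgap⟩ := hfin.exists_pos_forall_eq_zero_of_abs_lt
  obtain ⟨N, P, hP, hdisj, hcover, hsmall⟩ := hmu ε hε
  rw [mu.toFun_eq_sum_inter hP hdisj hcover hA]
  refine Finset.sum_eq_zero fun n _ ↦ ?_
  have hmem : A ∩ P n ∈ 𝒜.sets := 𝒜.isSetAlgebra.inter_mem hA (hP n)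
  refine hgap _ hmem ?_
  calc |mu.toFun (A ∩ P n)| ≤ var mu (A ∩ P n) := abs_le_var mu hmem
    _ ≤ var mu (P n) := var_mono mu inter_subset_right
    _ < ε := hsmall n

/-- The members of `𝒜` of total variation less than `ε`; strong continuity asks for finite
partitions of `Ω` into such sets. -/
def smallSets (lam : BAMeasure 𝒜) (ε : ℝ) : Set (Set Ω) := {A ∈ 𝒜.sets | var lam A < ε}

theorem stronglyContinuous_of_forall_exists_finset_cover {lam : BAMeasure 𝒜}
    (h : ∀ ε > 0, ∃ T : Finset (Set Ω), ↑T ⊆ smallSets lam ε ∧ ⋃₀ (T : Set (Set Ω)) = univ) :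
    StronglyContinuous lam := by
  intro ε hε
  obtain ⟨T, hT, hcover⟩ := h ε hε
  let A : Fin T.card → Set Ω := fun n ↦ T.equivFin.symm n
  have hA (n) : A n ∈ smallSets lam ε := hT (T.equivFin.symm n).2
  refine ⟨T.card, disjointed A, ?_, disjoint_disjointed A, ?_, fun n ↦ ?_⟩
  · exact 𝒜.isSetAlgebra.isSetRing.disjointed_mem fun n ↦ (hA n).1
  · rw [iUnion_disjointed, ← hcover, sUnion_eq_iUnion]
    exact T.equivFin.symm.surjective.iUnion_comp fun s : T ↦ (s : Set Ω)
  · exact (var_mono lam (disjointed_subset A n)).trans_lt (hA n).2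

theorem exists_ultrafilter_of_not_stronglyContinuous {lam : BAMeasure 𝒜}
    (hlam : ¬ StronglyContinuous lam) :
    ∃ ε > 0, ∃ U : Ultrafilter Ω, ∀ A ∈ smallSets lam ε, A ∉ U := by
  contrapose! hlam
  refine stronglyContinuous_of_forall_exists_finset_cover fun ε hε ↦ ?_
  by_contra! hcover
  obtain ⟨U, hU⟩ := exists_ultrafilter_forall_notMem hcover
  obtain ⟨A, hA, hAU⟩ := hlam ε hε U
  exact hU A hA hAU

namespace BAMeasure

open scoped Classical in
/-- The `{0, 1}`-valued finitely additive probability that gives mass `1` exactly to the members of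
the ultrafilter `U`. -/
noncomputable def ofUltrafilter (𝒜 : SetAlg Ω) (U : Ultrafilter Ω) : BAMeasure 𝒜 where
  toFun A := if A ∈ U then 1 else 0
  map_empty := if_neg U.empty_notMem
  additive A B _ _ hAB := by
    have hnotBoth : ¬ (A ∈ U ∧ B ∈ U) := fun ⟨hA, hB⟩ ↦
      U.empty_notMem (hAB.inter_eq ▸ U.inter_mem hA hB)
    by_cases hA : A ∈ U <;> by_cases hB : B ∈ U <;>
      simp_all [Ultrafilter.union_mem_iff]
  bounded := ⟨1, fun A _ ↦ by split_ifs <;> simp⟩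

variable {U : Ultrafilter Ω} {A : Set Ω}

theorem ofUltrafilter_of_mem (hA : A ∈ U) : (ofUltrafilter 𝒜 U).toFun A = 1 := if_pos hA

theorem ofUltrafilter_of_notMem (hA : A ∉ U) : (ofUltrafilter 𝒜 U).toFun A = 0 := if_neg hA

theorem finiteRange_ofUltrafilter : FiniteRange (ofUltrafilter 𝒜 U) := by
  refine (toFinite {0, 1}).subset ?_
  rintro _ ⟨A, -, rfl⟩
  by_cases hA : A ∈ U
  · exact .inr (ofUltrafilter_of_mem hA)
  · exact .inl (ofUltrafilter_of_notMem hA)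

theorem var_ofUltrafilter_nonpos (hA : A ∉ U) : var (ofUltrafilter 𝒜 U) A ≤ 0 :=
  var_nonpos _ fun _ _ hBA ↦ ofUltrafilter_of_notMem fun hB ↦ hA (mem_of_superset hB hBA)

theorem absCont_ofUltrafilter {lam : BAMeasure 𝒜} {ε : ℝ} (hε : 0 < ε)
    (hU : ∀ A ∈ smallSets lam ε, A ∉ U) : AbsCont (ofUltrafilter 𝒜 U) lam :=
  fun _ hη ↦ ⟨ε, hε, fun A hA hsmall ↦ (var_ofUltrafilter_nonpos (hU A ⟨hA, hsmall⟩)).trans_lt hη⟩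

end BAMeasure

/-- Theorem 7: `ba₀(λ)` contains a nonzero element if and only if `λ` is not strongly
continuous. -/
theorem stmt_4 {Ω : Type*} {𝒜 : SetAlg Ω} (lam : BAMeasure 𝒜) :
    (∃ mu : BAMeasure 𝒜, BA0rel lam mu ∧ ∃ A ∈ 𝒜.sets, mu.toFun A ≠ 0) ↔
    ¬ StronglyContinuous lam := by
  constructor
  · rintro ⟨mu, ⟨hfin, hac⟩, A, hA, hne⟩ hlam
    exact hne (hfin.eq_zero_of_stronglyContinuous (hac.stronglyContinuous hlam) hA)
  · intro hlam
    obtain ⟨ε, hε, U, hU⟩ := exists_ultrafilter_of_not_stronglyContinuous hlam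
    refine ⟨.ofUltrafilter 𝒜 U, ⟨BAMeasure.finiteRange_ofUltrafilter,
      BAMeasure.absCont_ofUltrafilter hε hU⟩, univ, 𝒜.isSetAlgebra.univ_mem, ?_⟩
    rw [BAMeasure.ofUltrafilter_of_mem univ_mem]
    exact one_ne_zero

end FA
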